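/- Let q be an odd prime power with q ≡ 1 (mod 4), let k be a divisor of q−1 with 3 < k < q−1, and suppose e = (q−1)/k is even. If (q,k) gives a 3-design, then k is not divisible by 3. -/

import Mathlib

/-!
Setting: `F` is a finite field of order `q`. The projective line `PG(1,q)` is
modelled as `Projectivization F (Fin 2 → F)`. Since scalar matrices act trivially
on the projective line, the images of a set under all elements of `SL(2,F)` form
exactly its `PSL(2,F)`-orbit; `mapSL g` is the map of the projective line induced
by `g : SL(2,F)`. For `k ∣ q - 1`, the unique subgroup of order `k` of `Fˣ` is the
set of `k`-th roots of unity `{x : F | x ^ k = 1}`, embedded into the projective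
line via `x ↦ [x : 1]`. `(q, k)` gives a 3-design iff there is `lam > 0` such that
every 3-subset of the projective line lies in exactly `lam` blocks of the orbit.
-/

noncomputable section

open Matrix

/-- The point at infinity `[1 : 0]` of the projective line over `F`. -/
def inftyPt (F : Type) [Field F] : Projectivization F (Fin 2 → F) :=
  Projectivization.mk F ![1, 0] (by
    intro h
    simpa using congrFun h 0)

/-- The embedding of `F` into the projective line, `x ↦ [x : 1]`. -/
def embedPt (F : Type) [Field F] (x : F) : Projectivization F (Fin 2 → F) :=
  Projectivization.mk F ![x, 1] (by
    intro h
    simpa using congrFun h 1)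

/-- The action of `g : SL(2,F)` on the projective line (as linear fractional
transformation). -/
def mapSL {F : Type} [Field F] (g : Matrix.SpecialLinearGroup (Fin 2) F) :
    Projectivization F (Fin 2 → F) → Projectivization F (Fin 2 → F) :=
  Projectivization.map (Matrix.SpecialLinearGroup.toLin' g : (Fin 2 → F) →ₗ[F] (Fin 2 → F))
    (Matrix.SpecialLinearGroup.toLin' g).injective

/-- The starter block: the unique subgroup of order `k` of `Fˣ` (the `k`-th roots
of unity, for `k ∣ q - 1`), regarded as a subset of the projective line. -/
def starterB (F : Type) [Field F] (k : ℕ) : Set (Projectivization F (Fin 2 → F)) :=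
  embedPt F '' {x : F | x ^ k = 1}

/-- The `PSL(2,F)`-orbit `GB` of the starter block. -/
def designBlocks (F : Type) [Field F] (k : ℕ) :
    Set (Set (Projectivization F (Fin 2 → F))) :=
  {S | ∃ g : Matrix.SpecialLinearGroup (Fin 2) F, S = mapSL g '' starterB F k}

/-- `GB` is the block set of a `3-(q+1, k, lam)` design: `lam` is positive and every
3-subset of the projective line is contained in exactly `lam` blocks. -/
def isThreeDesign (F : Type) [Field F] (k lam : ℕ) : Prop :=
  0 < lam ∧
    ∀ T : Finset (Projectivization F (Fin 2 → F)), T.card = 3 →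
      {S ∈ designBlocks F k | (T : Set (Projectivization F (Fin 2 → F))) ⊆ S}.ncard = lam

/-- `(q, k)` gives a 3-design. -/
def gives3Design (F : Type) [Field F] (k : ℕ) : Prop :=
  ∃ lam : ℕ, isThreeDesign F k lam

/-!
Let `χ` be the quadratic character. The sign `χ([u,v][v,w][w,u])` of a triple of points
`⟨u⟩, ⟨v⟩, ⟨w⟩`, where `[·,·]` is the determinant, is invariant under `SL(2,F)` and is negated by
`diag(n, 1)` for a nonsquare `n`, so it sums to `0` over the projective line. Counting triples in
blocks, a 3-design therefore has `∑ χ((a - b)(b - c)(c - a)) = 0` over `a, b, c ∈ B`.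

Since `(q - 1) / k` is even, `B` consists of squares, so the summand is invariant under
`(a, b, c) ↦ (ha, hb, hc)` for `h ∈ B` and we may put `a = 1`. Cyclically rotating `(1, b, c)` and
renormalising gives the map `(b, c) ↦ (b⁻¹c, b⁻¹)` of order three, whose fixed points are the
`(b, b²)` with `b³ = 1`. If `3 ∣ k`, these are `(1, 1)`, contributing `0`, and `(ω, ω²)` and
`(ω², ω)`, contributing the same sign because `-1` is a square. Hence the sum over `b, c` is
`±2` modulo `3`, and not `0`.
-/

section GroupSums

open Finset

theorem sum_eq_sum_fixedPoints_of_iterate_eq_id {α R : Type*} [Fintype α] [DecidableEq α] [Ring R]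
    {p : ℕ} [Fact p.Prime] [CharP R p] {σ : α → α} {n : ℕ} (hσ : σ^[p ^ n] = id)
    {f : α → R} (hf : ∀ x, f (σ x) = f x) :
    ∑ x, f x = ∑ x with σ x = x, f x := by
  classical
  have card_fiber (y : R) : (#{x | f x = y} : R) = #{x | σ x = x ∧ f x = y} := by
    let τ : Function.End {x // f x = y} := Subtype.map σ fun x hx ↦ (hf x).trans hx
    have hτ : τ ^ p ^ n = 1 := by
      funext x
      have hx : Subtype.val (τ^[p ^ n] x) = σ^[p ^ n] x.1 :=
        (Function.Semiconj.iterate_right (f := Subtype.val) (fun _ ↦ rfl) (p ^ n)).eq x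
      exact Subtype.ext (hx.trans (congrFun hσ x.1))
    have hfixed : Fintype.card (Function.fixedPoints τ) = #{x | σ x = x ∧ f x = y} := by
      rw [← Fintype.card_subtype]
      refine Fintype.card_congr (((Equiv.subtypeEquivRight fun x ↦ ?_).trans
        (Equiv.subtypeSubtypeEquivSubtypeInter (f · = y) fun x ↦ σ x = x)).trans
        (Equiv.subtypeEquivRight fun _ ↦ and_comm))
      exact Subtype.ext_iff
    have hmod := Equiv.Perm.card_fixedPoints_modEq hτ
    rw [Fintype.card_subtype, hfixed] at hmod
    exact (CharP.natCast_eq_natCast R p).2 hmod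
  have sum_fiber (s : Finset α) : ∑ x ∈ s, f x = ∑ y ∈ univ.image f, #{x ∈ s | f x = y} * y := by
    simp_rw [← nsmul_eq_mul, ← sum_const]
    exact (sum_fiberwise_of_maps_to' (fun x _ ↦ mem_image_of_mem f (mem_univ x)) id).symm
  simp_rw [sum_fiber, filter_filter, card_fiber]

variable {G : Type*} [Group G] [Fintype G]

theorem sum_pow_orderOf_eq_one [IsCyclic G] [DecidableEq G] {M : Type*} [AddCommMonoid M]
    (g : G) (f : G → M) :
    ∑ x with x ^ orderOf g = 1, f x = ∑ i ∈ range (orderOf g), f (g ^ i) := by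
  have hinj : Set.InjOn (g ^ ·) (range (orderOf g) : Set ℕ) := by
    simpa using pow_injOn_Iio_orderOf (x := g)
  have hpowers : (range (orderOf g)).image (g ^ ·) = ({x | x ^ orderOf g = 1} : Finset G) := by
    refine eq_of_subset_of_card_le ?_ ?_
    · intro x hx
      obtain ⟨i, -, rfl⟩ := mem_image.1 hx
      simp [pow_right_comm g i, pow_orderOf_eq_one]
    · rw [card_image_of_injOn hinj, card_range]
      exact IsCyclic.card_pow_eq_one_le (orderOf_pos g)
  rw [← hpowers, sum_image hinj]

variable {R : Type*} {f : G → G → G → R}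

theorem sum_eq_card_mul_of_mul_left_invariant [Semiring R]
    (hmul : ∀ g a b c, f (g * a) (g * b) (g * c) = f a b c) :
    ∑ a, ∑ b, ∑ c, f a b c = Fintype.card G * ∑ b, ∑ c, f 1 b c := by
  have htranslate (a : G) : ∑ b, ∑ c, f a b c = ∑ b, ∑ c, f 1 b c := by
    rw [← Equiv.sum_comp (Equiv.mulLeft a)]
    refine sum_congr rfl fun b _ ↦ ?_
    rw [← Equiv.sum_comp (Equiv.mulLeft a)]
    refine sum_congr rfl fun c _ ↦ ?_
    simpa using hmul a 1 b c
  simp [htranslate]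

theorem sum_eq_sum_pow_three_eq_one_of_rotate_invariant [DecidableEq G] [Ring R] [CharP R 3]
    (hmul : ∀ g a b c, f (g * a) (g * b) (g * c) = f a b c)
    (hrot : ∀ a b c, f a b c = f b c a) :
    ∑ b, ∑ c, f 1 b c = ∑ b with b ^ 3 = 1, f 1 b (b ^ 2) := by
  let σ : G × G → G × G := fun x ↦ (x.1⁻¹ * x.2, x.1⁻¹)
  have hσ : σ^[3 ^ 1] = id := by
    funext x
    simp [σ]
  have hσf (x : G × G) : f 1 (σ x).1 (σ x).2 = f 1 x.1 x.2 := by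
    rw [hrot 1 x.1 x.2, ← hmul x.1⁻¹ x.1 x.2 1]
    simp [σ]
  have hfixed (x : G × G) : σ x = x ↔ x.1 ^ 3 = 1 ∧ x.1 ^ 2 = x.2 := by
    rw [Prod.ext_iff, inv_mul_eq_iff_eq_mul, ← sq, inv_eq_iff_mul_eq_one, eq_comm (a := x.2),
      and_comm]
    exact and_congr_left fun h ↦ by rw [← h, ← pow_succ']
  rw [← Fintype.sum_prod_type', sum_eq_sum_fixedPoints_of_iterate_eq_id hσ hσf]
  simp only [hfixed]
  refine sum_nbij' Prod.fst (fun b ↦ (b, b ^ 2)) ?_ ?_ ?_ ?_ ?_ <;> aesop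

end GroupSums

section BlockCounting

open Finset

open Classical in
theorem sum_blocks_eq_mul_sum {P R : Type*} [Fintype P] [Semiring R] {𝔅 : Set (Set P)} {lam : ℕ}
    (hdesign : ∀ T : Finset P, #T = 3 → {S ∈ 𝔅 | (T : Set P) ⊆ S}.ncard = lam)
    {f : P → P → P → R} (hf : ∀ p q r, f p q r ≠ 0 → p ≠ q ∧ p ≠ r ∧ q ≠ r) :
    ∑ S ∈ 𝔅.toFinset, ∑ p ∈ S.toFinset, ∑ q ∈ S.toFinset, ∑ r ∈ S.toFinset, f p q r =
      lam * ∑ p, ∑ q, ∑ r, f p q r := by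
  have hcount (p q r : P) :
      ∑ S ∈ 𝔅.toFinset with p ∈ S ∧ q ∈ S ∧ r ∈ S, f p q r = lam * f p q r := by
    by_cases hzero : f p q r = 0
    · simp [hzero]
    obtain ⟨hpq, hpr, hqr⟩ := hf p q r hzero
    rw [← hdesign {p, q, r} (card_eq_three.2 ⟨p, q, r, hpq, hpr, hqr, rfl⟩), sum_const,
      nsmul_eq_mul, ← Set.ncard_coe_finset]
    congr 3
    ext S
    simp [Set.insert_subset_iff]
  calc ∑ S ∈ 𝔅.toFinset, ∑ p ∈ S.toFinset, ∑ q ∈ S.toFinset, ∑ r ∈ S.toFinset, f p q r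
      = ∑ S ∈ 𝔅.toFinset, ∑ t ∈ S.toFinset ×ˢ S.toFinset ×ˢ S.toFinset, f t.1 t.2.1 t.2.2 := by
        simp only [sum_product]
    _ = ∑ t : P × P × P, ∑ S ∈ 𝔅.toFinset with t.1 ∈ S ∧ t.2.1 ∈ S ∧ t.2.2 ∈ S,
          f t.1 t.2.1 t.2.2 := sum_comm' (by simp)
    _ = lam * ∑ p, ∑ q, ∑ r, f p q r := by
        simp only [hcount, ← mul_sum, Fintype.sum_prod_type]

end BlockCounting

section Bracket

variable {R : Type*} [CommRing R]

/-- The determinant of two vectors in the plane. -/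
def bracket (u v : Fin 2 → R) : R := (Pi.basisFun R (Fin 2)).det ![u, v]

theorem bracket_apply (u v : Fin 2 → R) : bracket u v = u 0 * v 1 - u 1 * v 0 := by
  rw [bracket, Pi.basisFun_det_apply, det_fin_two]
  simp [mul_comm]

theorem bracket_map (L : (Fin 2 → R) →ₗ[R] (Fin 2 → R)) (u v : Fin 2 → R) :
    bracket (L u) (L v) = LinearMap.det L * bracket u v := by
  rw [bracket, bracket, ← Module.Basis.det_comp]
  congr 1
  ext i : 1
  fin_cases i <;> rfl

end Bracket

section TripleSign

variable {F : Type*} [Field F] [Fintype F] [DecidableEq F]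

/-- The sign of an ordered triple of points of the projective line: the quadratic character of
`[u,v][v,w][w,u]` for representing vectors `u, v, w`. Rescaling a vector multiplies the product by
a square, so the choice of representatives does not matter. -/
def tripleSign (p q r : Projectivization F (Fin 2 → F)) : ℤ :=
  quadraticChar F (bracket p.rep q.rep * bracket q.rep r.rep * bracket r.rep p.rep)

theorem tripleSign_mk {u v w : Fin 2 → F} (hu : u ≠ 0) (hv : v ≠ 0) (hw : w ≠ 0) :
    tripleSign (Projectivization.mk F u hu) (Projectivization.mk F v hv)
      (Projectivization.mk F w hw) =
      quadraticChar F (bracket u v * bracket v w * bracket w u) := by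
  obtain ⟨a, ha⟩ := Projectivization.exists_smul_eq_mk_rep F u hu
  obtain ⟨b, hb⟩ := Projectivization.exists_smul_eq_mk_rep F v hv
  obtain ⟨c, hc⟩ := Projectivization.exists_smul_eq_mk_rep F w hw
  have hscale : bracket (a • u) (b • v) * bracket (b • v) (c • w) * bracket (c • w) (a • u) =
      ((a * b * c : Fˣ) : F) ^ 2 * (bracket u v * bracket v w * bracket w u) := by
    simp only [bracket_apply, Pi.smul_apply, Units.smul_def, smul_eq_mul, Units.val_mul]
    ring
  rw [tripleSign, ← ha, ← hb, ← hc, hscale, map_mul, quadraticChar_sq_one' (Units.ne_zero _),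
    one_mul]

theorem ne_of_tripleSign_ne_zero (p q r : Projectivization F (Fin 2 → F))
    (h : tripleSign p q r ≠ 0) : p ≠ q ∧ p ≠ r ∧ q ≠ r := by
  refine ⟨?_, ?_, ?_⟩ <;> rintro rfl <;> simp [tripleSign, bracket_apply, mul_comm] at h

theorem tripleSign_map (L : (Fin 2 → F) →ₗ[F] (Fin 2 → F)) (hL : Function.Injective L)
    (p q r : Projectivization F (Fin 2 → F)) :
    tripleSign (Projectivization.map L hL p) (Projectivization.map L hL q)
      (Projectivization.map L hL r) =
      quadraticChar F (LinearMap.det L) ^ 3 * tripleSign p q r := by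
  induction p using Projectivization.ind with | h u hu =>
  induction q using Projectivization.ind with | h v hv =>
  induction r using Projectivization.ind with | h w hw =>
  simp only [Projectivization.map_mk, tripleSign_mk, bracket_map, map_mul]
  ring

theorem sum_tripleSign_eq_zero [Fintype (Projectivization F (Fin 2 → F))]
    (hF : ringChar F ≠ 2) :
    ∑ p : Projectivization F (Fin 2 → F), ∑ q, ∑ r, tripleSign p q r = 0 := by
  obtain ⟨n, hn⟩ := quadraticChar_exists_neg_one' hF
  let L : (Fin 2 → F) →ₗ[F] (Fin 2 → F) := toLin' !![(n : F), 0; 0, 1]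
  have hdet : LinearMap.det L = n := by simp [L]
  have hL : Function.Injective L :=
    (L.equivOfDetNeZero (hdet ▸ n.ne_zero)).injective
  have hbij : Function.Bijective (Projectivization.map L hL) :=
    Finite.injective_iff_bijective.1 (Projectivization.map_injective L hL)
  have hneg (p q r : Projectivization F (Fin 2 → F)) :
      tripleSign (Projectivization.map L hL p) (Projectivization.map L hL q)
        (Projectivization.map L hL r) = -tripleSign p q r := by
    rw [tripleSign_map, hdet, hn]
    ring
  rw [← self_eq_neg]
  simp_rw [← Finset.sum_neg_distrib, ← hneg]
  symm
  refine (Finset.sum_congr rfl fun p _ ↦ ?_).trans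
    (hbij.sum_comp fun p ↦ ∑ q, ∑ r, tripleSign p q r)
  refine (Finset.sum_congr rfl fun q _ ↦ ?_).trans
    (hbij.sum_comp fun q ↦ ∑ r, tripleSign (Projectivization.map L hL p) q r)
  exact hbij.sum_comp _

end TripleSign

section AffineSign

variable {F : Type*} [Field F] [Fintype F] [DecidableEq F]

/-- The sign of an ordered triple of affine points of the projective line. -/
def affineSign (a b c : F) : ℤ := quadraticChar F ((a - b) * (b - c) * (c - a))

theorem affineSign_rotate (a b c : F) : affineSign a b c = affineSign b c a := by
  rw [affineSign, affineSign, mul_assoc, mul_comm]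

theorem affineSign_mul_left {g : F} (hg0 : g ≠ 0) (hg : IsSquare g) (a b c : F) :
    affineSign (g * a) (g * b) (g * c) = affineSign a b c := by
  have hfactor : (g * a - g * b) * (g * b - g * c) * (g * c - g * a) =
      g ^ 3 * ((a - b) * (b - c) * (c - a)) := by ring
  rw [affineSign, hfactor, map_mul, map_pow, (quadraticChar_one_iff_isSquare hg0).2 hg, one_pow,
    one_mul, affineSign]

theorem affineSign_swap (hneg : IsSquare (-1 : F)) (a b c : F) :
    affineSign a c b = affineSign a b c := by
  have hfactor : (a - c) * (c - b) * (b - a) = -1 * ((a - b) * (b - c) * (c - a)) := by ring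
  rw [affineSign, hfactor, map_mul, (quadraticChar_one_iff_isSquare (by simp)).2 hneg, one_mul,
    affineSign]

theorem affineSign_eq_one_or_neg_one {a b c : F} (hab : a ≠ b) (hbc : b ≠ c) (hca : c ≠ a) :
    affineSign a b c = 1 ∨ affineSign a b c = -1 :=
  quadraticChar_dichotomy
    (mul_ne_zero (mul_ne_zero (sub_ne_zero.2 hab) (sub_ne_zero.2 hbc)) (sub_ne_zero.2 hca))

theorem sum_affineSign_cube_roots_ne_zero (hneg : IsSquare (-1 : F)) {ω : F}
    (hω : IsPrimitiveRoot ω 3) :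
    ∑ i ∈ Finset.range 3, (affineSign 1 (ω ^ i) ((ω ^ i) ^ 2) : ZMod 3) ≠ 0 := by
  have hω4 : (ω ^ 2) ^ 2 = ω := by linear_combination ω * hω.pow_eq_one
  have hzero : affineSign (1 : F) 1 1 = 0 := by simp [affineSign]
  have hω1 : ω ≠ 1 := hω.ne_one (by norm_num)
  have hω2 : ω ^ 2 ≠ 1 := hω.pow_ne_one_of_pos_of_lt (by norm_num) (by norm_num)
  have hωω2 : ω ≠ ω ^ 2 := by
    intro h
    exact hω1 (by linear_combination hω.pow_eq_one + (1 + ω) * h)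
  simp only [Finset.sum_range_succ, Finset.sum_range_zero, pow_zero, pow_one, one_pow, hzero, hω4,
    affineSign_swap hneg 1 ω]
  rcases affineSign_eq_one_or_neg_one hω1.symm hωω2 hω2 with h | h <;> rw [h] <;> decide

theorem sum_affineSign_subgroup_ne_zero (hneg : IsSquare (-1 : F)) (H : Subgroup Fˣ) [Fintype H]
    (hH : ∀ h ∈ H, IsSquare (h : F)) (h3 : 3 ∣ Nat.card H) :
    ∑ a : H, ∑ b : H, ∑ c : H, affineSign (F := F) (a : Fˣ) (b : Fˣ) (c : Fˣ) ≠ 0 := by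
  have : Fact (Nat.Prime 3) := ⟨Nat.prime_three⟩
  obtain ⟨ω, hω⟩ := exists_prime_orderOf_dvd_card' 3 h3
  have hprim : IsPrimitiveRoot ((ω : Fˣ) : F) 3 := by
    have h := IsPrimitiveRoot.orderOf ((ω : Fˣ) : F)
    rwa [orderOf_units, Subgroup.orderOf_coe, hω] at h
  have hmul (g a b c : H) : affineSign (F := F) (g * a : Fˣ) (g * b : Fˣ) (g * c : Fˣ) =
      affineSign (F := F) (a : Fˣ) (b : Fˣ) (c : Fˣ) := by
    simpa using affineSign_mul_left (Units.ne_zero _) (hH g g.2) (a : Fˣ) (b : Fˣ) (c : Fˣ)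
  rw [sum_eq_card_mul_of_mul_left_invariant hmul]
  refine mul_ne_zero (by exact_mod_cast Fintype.card_ne_zero) fun hsum ↦ ?_
  apply sum_affineSign_cube_roots_ne_zero hneg hprim
  have hfixed := sum_eq_sum_pow_three_eq_one_of_rotate_invariant (R := ZMod 3)
    (f := fun a b c : H ↦ (affineSign (F := F) (a : Fˣ) (b : Fˣ) (c : Fˣ) : ZMod 3))
    (fun g a b c ↦ congrArg _ (hmul g a b c)) (fun a b c ↦ congrArg _ (affineSign_rotate _ _ _))
  have hpowers := sum_pow_orderOf_eq_one ω
    fun b : H ↦ (affineSign (F := F) 1 (b : Fˣ) (b ^ 2 : Fˣ) : ZMod 3)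
  rw [hω] at hpowers
  calc ∑ i ∈ Finset.range 3, (affineSign 1 (((ω : Fˣ) : F) ^ i) ((((ω : Fˣ) : F) ^ i) ^ 2) : ZMod 3)
      = ∑ b : H with b ^ 3 = 1, (affineSign (F := F) 1 (b : Fˣ) (b ^ 2 : Fˣ) : ZMod 3) := by
        simpa using hpowers.symm
    _ = ((∑ b : H, ∑ c : H, affineSign (F := F) 1 (b : Fˣ) (c : Fˣ) : ℤ) : ZMod 3) := by
        simpa using hfixed.symm
    _ = 0 := by simpa using congrArg (Int.cast : ℤ → ZMod 3) hsum

end AffineSign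

section RootsOfUnity

variable {F : Type*} [Field F] {k : ℕ}

theorem natCard_rootsOfUnity_of_dvd [Finite F] (hk : k ∣ Nat.card F - 1) :
    Nat.card (rootsOfUnity k F) = k := by
  have hker : rootsOfUnity k F = (powMonoidHom k : Fˣ →* Fˣ).ker := by
    ext x
    simp
  rw [hker, IsCyclic.card_powMonoidHom_ker, Nat.card_units, Nat.gcd_eq_right hk]

theorem isSquare_of_mem_rootsOfUnity [Fintype F] (hF : ringChar F ≠ 2)
    (hk : k ∣ Fintype.card F - 1) (heven : Even ((Fintype.card F - 1) / k))
    {x : Fˣ} (hx : x ∈ rootsOfUnity k F) :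
    IsSquare (x : F) := by
  obtain ⟨m, hm⟩ := heven
  have hcard : Fintype.card F - 1 = 2 * (k * m) := by
    rw [← Nat.mul_div_cancel' hk, hm]
    ring
  have hhalf : Fintype.card F / 2 = k * m := by
    have := FiniteField.odd_card_of_char_ne_two hF
    lia
  rw [FiniteField.isSquare_iff hF x.ne_zero, hhalf, pow_mul, (mem_rootsOfUnity' k x).1 hx, one_pow]

end RootsOfUnity

section Design

variable {F : Type} [Field F] {k : ℕ}

theorem embedPt_injective : Function.Injective (embedPt F) := by
  intro a b hab
  obtain ⟨c, hc⟩ := (Projectivization.mk_eq_mk_iff' F _ _ _ _).1 hab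
  have h0 : c * b = a := by simpa using congrFun hc 0
  have h1 : c = 1 := by simpa using congrFun hc 1
  rw [← h0, h1, one_mul]

theorem mapSL_injective (g : SpecialLinearGroup (Fin 2) F) : Function.Injective (mapSL g) :=
  Projectivization.map_injective _ _

theorem starterB_eq_range [NeZero k] :
    starterB F k = Set.range fun x : rootsOfUnity k F ↦ embedPt F (x : Fˣ) := by
  ext p
  constructor
  · rintro ⟨x, hx, rfl⟩
    exact ⟨rootsOfUnity.mkOfPowEq x hx, by simp⟩
  · rintro ⟨x, rfl⟩
    exact ⟨_, (mem_rootsOfUnity' k _).1 x.2, rfl⟩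

variable [Fintype F] [DecidableEq F]

theorem tripleSign_embedPt (a b c : F) :
    tripleSign (embedPt F a) (embedPt F b) (embedPt F c) = affineSign a b c := by
  simp [embedPt, tripleSign_mk, affineSign, bracket_apply]

theorem tripleSign_mapSL (g : SpecialLinearGroup (Fin 2) F)
    (p q r : Projectivization F (Fin 2 → F)) :
    tripleSign (mapSL g p) (mapSL g q) (mapSL g r) = tripleSign p q r := by
  have hdet : LinearMap.det (SpecialLinearGroup.toLin' g : (Fin 2 → F) →ₗ[F] (Fin 2 → F)) = 1 := by
    rw [SpecialLinearGroup.toLin'_to_linearMap, LinearMap.det_toLin', g.det_coe]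
  rw [mapSL, tripleSign_map, hdet, map_one, one_pow, one_mul]

open Classical in
theorem sum_tripleSign_of_mem_designBlocks [Fintype (Projectivization F (Fin 2 → F))] [NeZero k]
    [Fintype (rootsOfUnity k F)] {S : Set (Projectivization F (Fin 2 → F))}
    (hS : S ∈ designBlocks F k) :
    ∑ p ∈ S.toFinset, ∑ q ∈ S.toFinset, ∑ r ∈ S.toFinset, tripleSign p q r =
      ∑ a : rootsOfUnity k F, ∑ b : rootsOfUnity k F, ∑ c : rootsOfUnity k F,
        affineSign (F := F) (a : Fˣ) (b : Fˣ) (c : Fˣ) := by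
  obtain ⟨g, hg⟩ := hS
  let φ : rootsOfUnity k F → Projectivization F (Fin 2 → F) := fun x ↦ mapSL g (embedPt F (x : Fˣ))
  have hφ : Function.Injective φ :=
    (mapSL_injective g).comp <| embedPt_injective.comp <|
      Units.val_injective.comp Subtype.val_injective
  have hblock : S.toFinset = Finset.univ.image φ := by
    ext p
    simp [hg, starterB_eq_range, φ]
  simp_rw [hblock, Finset.sum_image hφ.injOn, φ, tripleSign_mapSL, tripleSign_embedPt]

theorem sum_affineSign_rootsOfUnity_eq_zero [NeZero k] [Fintype (rootsOfUnity k F)]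
    (hF : ringChar F ≠ 2) (hdesign : gives3Design F k) :
    ∑ a : rootsOfUnity k F, ∑ b : rootsOfUnity k F, ∑ c : rootsOfUnity k F,
      affineSign (F := F) (a : Fˣ) (b : Fˣ) (c : Fˣ) = 0 := by
  classical
  obtain ⟨lam, -, hlam⟩ := hdesign
  have := Fintype.ofFinite (Projectivization F (Fin 2 → F))
  have hcount := sum_blocks_eq_mul_sum hlam ne_of_tripleSign_ne_zero
  have hconst := Finset.sum_congr rfl fun S (hS : S ∈ (designBlocks F k).toFinset) ↦
    sum_tripleSign_of_mem_designBlocks (Set.mem_toFinset.1 hS)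
  rw [hconst, sum_tripleSign_eq_zero hF, mul_zero, Finset.sum_const, nsmul_eq_mul] at hcount
  have hblocks : (designBlocks F k).toFinset.Nonempty := Set.toFinset_nonempty.2 ⟨_, 1, rfl⟩
  exact (mul_eq_zero.1 hcount).resolve_left (by exact_mod_cast hblocks.card_ne_zero)

end Design

/-- Claim 1 in the proof of Theorem 3.1: if `e = (q-1)/k` is even and `(q,k)`
gives a 3-design, then `3 ∤ k`. -/
theorem stmt_8 (F : Type) [Field F] [Fintype F] [DecidableEq F]
    (q k : ℕ) (hq : Fintype.card F = q) (hqodd : Odd q) (hq4 : q % 4 = 1)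
    (hkdvd : k ∣ q - 1) (hk3 : 3 < k) (hkq : k < q - 1)
    (he : Even ((q - 1) / k))
    (hdes : gives3Design F k) :
    ¬ (3 ∣ k) := by
  subst hq
  intro h3
  have : NeZero k := ⟨by lia⟩
  have := Fintype.ofFinite (rootsOfUnity k F)
  have hF : ringChar F ≠ 2 := by
    intro h
    have := FiniteField.even_card_of_char_two h
    lia
  have hneg : IsSquare (-1 : F) := FiniteField.isSquare_neg_one_iff.2 (by lia)
  have hsquares (x : Fˣ) (hx : x ∈ rootsOfUnity k F) : IsSquare (x : F) :=
    isSquare_of_mem_rootsOfUnity hF hkdvd he hx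
  have hcard : Nat.card (rootsOfUnity k F) = k :=
    natCard_rootsOfUnity_of_dvd (by rwa [Nat.card_eq_fintype_card])
  exact sum_affineSign_subgroup_ne_zero hneg (rootsOfUnity k F) hsquares (by rwa [hcard])
    (sum_affineSign_rootsOfUnity_eq_zero hF hdes)
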